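/- arXiv:math/0204313 — 3 statements merged into one kernel-verified Lean document; each statement's English description precedes it below -/
import Mathlib

section
/- For all θ, θ' ∈ [0,1], ∫₀^∞ g_{2s}(θ,θ') ds = min(θ,θ') - θθ' (the covariance kernel of the standard Brownian bridge, i.e. the Green function of -A with A = (1/2) d²/dθ² and homogeneous Dirichlet boundary conditions equals 2(min(θ,θ') - θθ')). -/
open MeasureTheory Real Filter

/-- Gauss–Weierstrass kernel: fundamental solution of `∂u/∂t = (1/2)∂²u/∂x²` on `ℝ`. -/
noncomputable def heatK (t x : ℝ) : ℝ :=
  (Real.sqrt (2 * Real.pi * t))⁻¹ * Real.exp (-(x ^ 2) / (2 * t))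

/-- Heat kernel on the half-line `(0,∞)` with Dirichlet boundary condition at `0`. -/
noncomputable def heatG (t a b : ℝ) : ℝ := heatK t (a - b) - heatK t (a + b)

/-- Method-of-images series for the Dirichlet heat kernel on `(0,1)`. -/
noncomputable def heatg (t θ θ' : ℝ) : ℝ :=
  ∑' n : ℤ, (heatK t (θ - θ' + 2 * (n : ℝ)) - heatK t (θ + θ' + 2 * (n : ℝ)))

/-- `q_t(θ,θ') = ∫₀ᵗ g_{2s}(θ,θ') ds`. -/
noncomputable def qker (t θ θ' : ℝ) : ℝ := ∫ s in Set.Ioc (0 : ℝ) t, heatg (2 * s) θ θ'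

/-- `q^t(θ,θ') = ∫ₜ^∞ g_{2s}(θ,θ') ds`. -/
noncomputable def qkerTop (t θ θ' : ℝ) : ℝ := ∫ s in Set.Ioi t, heatg (2 * s) θ θ'

/-!
By Poisson summation (the functional equation of the theta kernels) the method-of-images series
becomes the eigenfunction expansion
`g_t(θ, θ') = ∑_{k ≥ 1} 2 sin(πkθ) sin(πkθ') exp(-(πk)² t / 2)`. Integrating `g_{2s}` in `s` term by
term replaces each exponential by `1 / (πk)²`, which gives the Mercer series of the Brownian bridge
covariance. The latter is summed by writing the product of sines as a difference of cosines and
using the Fourier series of the Bernoulli polynomial `B₂`.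
-/

theorem hasSum_integral_Ioi_of_hasSum_mul_exp {ι : Type*} [Countable ι] {a p : ι → ℝ} {F : ℝ → ℝ}
    (hp : ∀ i, a i = 0 ∨ 0 < p i) (hF : ∀ t > 0, HasSum (fun i ↦ a i * exp (-p i * t)) (F t))
    (hsum : Summable fun i ↦ a i / p i) :
    HasSum (fun i ↦ a i / p i) (∫ t in Set.Ioi 0, F t) := by
  have hsum_norm : Summable fun i ↦ ‖(a i : ℂ)‖ / p i ^ (1 : ℂ).re := by
    refine hsum.norm.congr fun i ↦ ?_
    rcases hp i with h | h
    · simp [h]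
    · simp [abs_of_pos h]
  have hmellin := hasSum_mellin (a := fun i ↦ (a i : ℂ)) (F := fun t ↦ (F t : ℂ)) (s := 1)
    (fun i ↦ (hp i).imp_left Complex.ofReal_eq_zero.mpr) (by simp)
    (fun t ht ↦ mod_cast hF t ht) hsum_norm
  simp only [mellin, Complex.Gamma_one, one_mul, Complex.cpow_one, sub_self, Complex.cpow_zero,
    one_smul, integral_complex_ofReal] at hmellin
  exact_mod_cast hmellin

theorem hasSum_int_heatK {t L : ℝ} (ht : 0 < t) (hL : 0 < L) (x : ℝ) :
    HasSum (fun n : ℤ ↦ heatK t (x + L * n))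
      (HurwitzZeta.cosKernel (x / L : ℝ) (2 * π * t / L ^ 2) / L) := by
  have hpoisson : HasSum (fun n : ℤ ↦ exp (-π * (n + x / L) ^ 2 * (L ^ 2 / (2 * π * t))))
      (√(2 * π * t) / L * HurwitzZeta.cosKernel (x / L : ℝ) (2 * π * t / L ^ 2)) := by
    convert! HurwitzZeta.hasSum_int_evenKernel (x / L) (t := L ^ 2 / (2 * π * t))
      (by positivity) using 1
    rw [HurwitzZeta.evenKernel_functional_equation, ← sqrt_eq_rpow, sqrt_div (sq_nonneg L),
      sqrt_sq hL.le, one_div_div, one_div_div]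
  convert! hpoisson.mul_left (√(2 * π * t))⁻¹ using 1
  · funext n
    rw [heatK]
    congr 2
    field_simp
    ring
  · field_simp

theorem hasSum_cos_sub_cos_heatg {t : ℝ} (ht : 0 < t) (θ θ' : ℝ) :
    HasSum (fun n : ℕ ↦ (cos (π * (n + 1) * (θ - θ')) - cos (π * (n + 1) * (θ + θ'))) *
      exp (-(π * (n + 1)) ^ 2 * (t / 2))) (heatg t θ θ') := by
  have hu : 0 < 2 * π * t / 2 ^ 2 := by positivity
  have himages : heatg t θ θ' =
      HurwitzZeta.cosKernel ((θ - θ') / 2 : ℝ) (2 * π * t / 2 ^ 2) / 2 -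
        HurwitzZeta.cosKernel ((θ + θ') / 2 : ℝ) (2 * π * t / 2 ^ 2) / 2 :=
    ((hasSum_int_heatK ht two_pos (θ - θ')).sub (hasSum_int_heatK ht two_pos (θ + θ'))).tsum_eq
  rw [himages]
  convert! ((HurwitzZeta.hasSum_nat_cosKernel₀ ((θ - θ') / 2) hu).sub
    (HurwitzZeta.hasSum_nat_cosKernel₀ ((θ + θ') / 2) hu)).div_const 2 using 1
  · funext n
    ring_nf
  · ring

theorem hasSum_heatg {t : ℝ} (ht : 0 < t) (θ θ' : ℝ) :
    HasSum (fun n : ℕ ↦ 2 * sin (π * (n + 1) * θ) * sin (π * (n + 1) * θ') *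
      exp (-(π * (n + 1)) ^ 2 * (t / 2))) (heatg t θ θ') := by
  simpa only [two_mul_sin_mul_sin, ← mul_sub, ← mul_add] using hasSum_cos_sub_cos_heatg ht θ θ'

theorem hasSum_cos_div_sq {x : ℝ} (hx : |x| ≤ 2) :
    HasSum (fun n : ℕ ↦ cos (π * (n + 1) * x) / (π * (n + 1)) ^ 2)
      (x ^ 2 / 4 - |x| / 2 + 1 / 6) := by
  have hbernoulli := hasSum_one_div_nat_pow_mul_cos one_ne_zero (x := |x| / 2)
    ⟨by positivity, by linarith⟩
  rw [← bernoulliFun, mul_one, bernoulliFun_two, ← hasSum_nat_add_iff' 1] at hbernoulli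
  convert! hbernoulli.mul_left (π ^ 2)⁻¹ using 1
  · funext n
    have hcos : cos (2 * π * ↑(n + 1) * (|x| / 2)) = cos (π * (n + 1) * x) := by
      rw [← cos_abs (π * (n + 1) * x), abs_mul, abs_of_pos (by positivity : 0 < π * ((n : ℝ) + 1))]
      push_cast
      ring_nf
    rw [hcos]
    push_cast
    field_simp
  · rw [Finset.sum_range_one, Nat.cast_zero, zero_pow two_ne_zero, div_zero, zero_mul, sub_zero,
      Nat.factorial_two, ← sq_abs x]
    push_cast
    field_simp
    ring

theorem hasSum_sin_mul_sin_div_sq {θ θ' : ℝ} (hadd : θ + θ' ∈ Set.Icc 0 2) (hsub : |θ - θ'| ≤ 2) :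
    HasSum (fun n : ℕ ↦ 2 * sin (π * (n + 1) * θ) * sin (π * (n + 1) * θ') / (π * (n + 1)) ^ 2)
      (min θ θ' - θ * θ') := by
  have habs_add : |θ + θ'| = θ + θ' := abs_of_nonneg hadd.1
  have habs_sub : |θ - θ'| = θ + θ' - 2 * min θ θ' := by
    rw [← max_sub_min_eq_abs', ← min_add_max θ θ']
    ring
  convert! (hasSum_cos_div_sq hsub).sub (hasSum_cos_div_sq (habs_add.trans_le hadd.2)) using 1
  · funext n
    rw [two_mul_sin_mul_sin, ← mul_sub, ← mul_add, sub_div]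
  · rw [habs_add, habs_sub]
    ring

theorem stmt4_general {θ θ' : ℝ} (hadd : θ + θ' ∈ Set.Icc 0 2) (hsub : |θ - θ'| ≤ 2) :
    ∫ s in Set.Ioi (0 : ℝ), heatg (2 * s) θ θ' = min θ θ' - θ * θ' := by
  have hmercer := hasSum_sin_mul_sin_div_sq hadd hsub
  have hexpansion (s : ℝ) (hs : 0 < s) := hasSum_heatg (mul_pos two_pos hs) θ θ'
  simp only [mul_div_cancel_left₀ _ (two_ne_zero' ℝ)] at hexpansion
  exact (hasSum_integral_Ioi_of_hasSum_mul_exp (fun n ↦ .inr (by positivity)) hexpansion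
    hmercer.summable).unique hmercer

theorem stmt4 (θ θ' : ℝ) (hθ : θ ∈ Set.Icc (0 : ℝ) 1) (hθ' : θ' ∈ Set.Icc (0 : ℝ) 1) :
    ∫ s in Set.Ioi (0 : ℝ), heatg (2 * s) θ θ' = min θ θ' - θ * θ' :=
  stmt4_general ⟨by linarith [hθ.1, hθ'.1], by linarith [hθ.2, hθ'.2]⟩
    (abs_le.mpr ⟨by linarith [hθ.1, hθ'.2], by linarith [hθ.2, hθ'.1]⟩)
end

section
/- For every t > 0 and θ, θ' ∈ (0,1): ∫₀¹ ∫₀¹ g_t(θ,σ) (min(σ,σ') - σσ') g_t(θ',σ') dσ dσ' = ∫_t^∞ g_{2s}(θ,θ') ds. (In operator language: e^{tA} Q_∞ e^{tA} = Q_∞ - Q_t, so that if β is a standard Brownian bridge then e^{tA}β is centered Gaussian with covariance kernel q^t(θ,θ') := ∫_t^∞ g_{2s}(θ,θ') ds.) -/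
open MeasureTheory Real Filter

/-!
Poisson summation turns the method-of-images series into the sine expansion
`g_t(x, y) = ∑ₙ 2 exp(-ωₙ² t / 2) sin (ωₙ x) sin (ωₙ y)` with `ωₙ = π (n + 1)`. The Brownian bridge
covariance `min x y - x y` is the Green's function of `-d²/dx²` with Dirichlet conditions on
`(0, 1)`, so it acts on the `n`-th mode as multiplication by `ωₙ⁻²`. Hence the double integral has
the sine expansion with coefficients `2 exp(-ωₙ² t) / ωₙ²`, and `exp(-ωₙ² t) / ωₙ²` is the integral
of `exp(-ωₙ² s)` over `s > t`.
-/

open HurwitzZeta in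
theorem hasSum_heatK_add_period_mul {t L : ℝ} (ht : 0 < t) (hL : 0 < L) (x : ℝ) :
    HasSum (fun n : ℤ => heatK t (x + L * n))
      (cosKernel ((x / L : ℝ) : UnitAddCircle) (2 * π * t / L ^ 2) / L) := by
  have h := (hasSum_int_evenKernel (x / L) (t := L ^ 2 / (2 * π * t)) (by positivity)).mul_left
    (√(2 * π * t))⁻¹
  rw [evenKernel_functional_equation] at h
  convert! h using 1
  · ext n
    unfold heatK
    congr 2
    field_simp
    ring
  · rw [one_div_div, ← sqrt_eq_rpow, sqrt_div' _ (by positivity), sqrt_sq hL.le]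
    field_simp

/-- The frequency `ωₙ = π (n + 1)` of the `n`-th Dirichlet mode `x ↦ sin (ωₙ x)` of `(0, 1)`.
The shift by one lets the modes be indexed by all of `ℕ`. -/
noncomputable def sineFreq (n : ℕ) : ℝ := π * (n + 1)

theorem natCast_add_one_le_sineFreq (n : ℕ) : (n + 1 : ℝ) ≤ sineFreq n :=
  le_mul_of_one_le_left (by positivity) (by linarith [pi_gt_three])

theorem one_le_sineFreq (n : ℕ) : 1 ≤ sineFreq n :=
  le_trans (by simp) (natCast_add_one_le_sineFreq n)

theorem sineFreq_pos (n : ℕ) : 0 < sineFreq n :=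
  one_pos.trans_le (one_le_sineFreq n)

theorem one_le_sineFreq_sq (n : ℕ) : 1 ≤ sineFreq n ^ 2 :=
  one_le_pow₀ (one_le_sineFreq n)

theorem sin_sineFreq (n : ℕ) : sin (sineFreq n) = 0 := by
  rw [sineFreq, mul_comm]
  exact_mod_cast sin_nat_mul_pi (n + 1)

theorem integral_cos_pi_mul_int_mul {k : ℤ} (hk : k ≠ 0) :
    ∫ x in (0 : ℝ)..1, cos (π * k * x) = 0 := by
  have hπk : π * k ≠ 0 := by positivity
  rw [intervalIntegral.integral_comp_mul_left cos hπk, integral_cos]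
  simp [mul_comm π, sin_int_mul_pi]

theorem integral_sin_sineFreq_mul_sin_sineFreq (m n : ℕ) :
    ∫ x in (0 : ℝ)..1, sin (sineFreq m * x) * sin (sineFreq n * x) =
      if m = n then 1 / 2 else 0 := by
  have product_to_sum : ∀ x, sin (sineFreq m * x) * sin (sineFreq n * x) =
      (cos (π * (m - n : ℤ) * x) - cos (π * (m + n + 2 : ℤ) * x)) / 2 := fun x => by
    have hsub : π * (m - n : ℤ) * x = sineFreq m * x - sineFreq n * x := by
      unfold sineFreq; push_cast; ring
    have hadd : π * (m + n + 2 : ℤ) * x = sineFreq m * x + sineFreq n * x := by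
      unfold sineFreq; push_cast; ring
    rw [hsub, hadd, cos_sub, cos_add]
    ring
  simp_rw [product_to_sum]
  rw [intervalIntegral.integral_div, intervalIntegral.integral_sub
    (Continuous.intervalIntegrable (by fun_prop) _ _)
    (Continuous.intervalIntegrable (by fun_prop) _ _),
    integral_cos_pi_mul_int_mul (k := m + n + 2) (by lia)]
  split_ifs with h
  · simp [h]
  · rw [integral_cos_pi_mul_int_mul (by lia)]
    simp

theorem integral_sin_const_mul {a : ℝ} (ha : a ≠ 0) (u v : ℝ) :
    ∫ x in u..v, sin (a * x) = (cos (a * u) - cos (a * v)) / a := by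
  rw [intervalIntegral.integral_comp_mul_left sin ha, integral_sin, smul_eq_mul, inv_mul_eq_div]

theorem integral_id_mul_sin_const_mul {a : ℝ} (ha : a ≠ 0) (u v : ℝ) :
    ∫ x in u..v, x * sin (a * x) =
      (sin (a * v) / a ^ 2 - v * cos (a * v) / a) -
        (sin (a * u) / a ^ 2 - u * cos (a * u) / a) := by
  refine intervalIntegral.integral_eq_sub_of_hasDerivAt
    (f := fun x => sin (a * x) / a ^ 2 - x * cos (a * x) / a) (fun x _ => ?_)
    (Continuous.intervalIntegrable (by fun_prop) _ _)
  have hlin : HasDerivAt (fun x => a * x) a x := by simpa using (hasDerivAt_id x).const_mul a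
  convert! (hlin.sin.div_const (a ^ 2)).sub (((hasDerivAt_id x).mul hlin.cos).div_const a) using 1
  simp only [id]
  field_simp
  ring

theorem integral_min_sub_mul_mul_sin {a : ℝ} (ha : a ≠ 0) (hsin : sin a = 0) {x : ℝ}
    (hx : x ∈ Set.Icc (0 : ℝ) 1) :
    ∫ y in (0 : ℝ)..1, (min x y - x * y) * sin (a * y) = sin (a * x) / a ^ 2 := by
  have left : ∫ y in (0 : ℝ)..x, (min x y - x * y) * sin (a * y) =
      ∫ y in (0 : ℝ)..x, (1 - x) * (y * sin (a * y)) := by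
    refine intervalIntegral.integral_congr fun y hy => ?_
    rw [Set.uIcc_of_le hx.1] at hy
    simp only [min_eq_right hy.2]
    ring
  have right : ∫ y in x..1, (min x y - x * y) * sin (a * y) =
      ∫ y in x..1, x * (sin (a * y) - y * sin (a * y)) := by
    refine intervalIntegral.integral_congr fun y hy => ?_
    rw [Set.uIcc_of_le hx.2] at hy
    simp only [min_eq_left hy.1]
    ring
  rw [← intervalIntegral.integral_add_adjacent_intervals (b := x)
      (Continuous.intervalIntegrable (by fun_prop) _ _)
      (Continuous.intervalIntegrable (by fun_prop) _ _),
    left, right, intervalIntegral.integral_const_mul, intervalIntegral.integral_const_mul,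
    intervalIntegral.integral_sub (Continuous.intervalIntegrable (by fun_prop) _ _)
      (Continuous.intervalIntegrable (by fun_prop) _ _),
    integral_id_mul_sin_const_mul ha, integral_id_mul_sin_const_mul ha, integral_sin_const_mul ha]
  simp only [mul_one, mul_zero, sin_zero, hsin]
  field_simp
  ring

/-- The sine series `∑ₙ cₙ sin (ωₙ x)`, i.e. the function on `(0, 1)` (extended to an odd
`2`-periodic function on `ℝ`) with coefficients `c` in the basis of Dirichlet modes. At points
where the series is not absolutely convergent its value is the junk value `0`. -/
noncomputable def sineSeries (c : ℕ → ℝ) (x : ℝ) : ℝ := ∑' n, c n * sin (sineFreq n * x)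

theorem abs_mul_sin_le (c x : ℝ) : |c * sin x| ≤ |c| := by
  rw [abs_mul]
  exact mul_le_of_le_one_right (abs_nonneg c) (abs_sin_le_one x)

section SineSeries

variable {c : ℕ → ℝ}

theorem hasSum_sineSeries (hc : Summable c) (x : ℝ) :
    HasSum (fun n => c n * sin (sineFreq n * x)) (sineSeries c x) :=
  (Summable.of_norm_bounded hc.abs fun _ => abs_mul_sin_le _ _).hasSum

theorem continuous_sineSeries (hc : Summable c) : Continuous (sineSeries c) :=
  continuous_tsum (fun _ => by fun_prop) hc.abs fun _ _ => abs_mul_sin_le _ _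

theorem integral_mul_sineSeries (hc : Summable c) {f : ℝ → ℝ} {a b : ℝ}
    (hf : IntervalIntegrable f volume a b) :
    ∫ x in a..b, f x * sineSeries c x = ∑' n, c n * ∫ x in a..b, f x * sin (sineFreq n * x) := by
  simp_rw [← intervalIntegral.integral_const_mul]
  symm
  refine (intervalIntegral.hasSum_integral_of_dominated_convergence (fun n x => |f x| * |c n|)
    (fun n => ?_) (fun n => ae_of_all _ fun x _ => ?_) (ae_of_all _ fun x _ => hc.abs.mul_left _)
    ?_ (ae_of_all _ fun x _ => ?_)).tsum_eq
  · exact (hf.def'.aestronglyMeasurable.mul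
      (Continuous.aestronglyMeasurable (by fun_prop))).const_mul (c n)
  · rw [mul_left_comm, norm_mul]
    exact mul_le_mul_of_nonneg_left (abs_mul_sin_le _ _) (abs_nonneg _)
  · simp_rw [tsum_mul_left]
    exact hf.abs.mul_const _
  · simpa only [mul_left_comm] using (hasSum_sineSeries hc x).mul_left (f x)

theorem integral_sineSeries_mul_sin (hc : Summable c) (n : ℕ) :
    ∫ x in (0 : ℝ)..1, sineSeries c x * sin (sineFreq n * x) = c n / 2 := by
  simp_rw [mul_comm (sineSeries c _)]
  rw [integral_mul_sineSeries hc (Continuous.intervalIntegrable (by fun_prop) _ _)]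
  simp [integral_sin_sineFreq_mul_sin_sineFreq, div_eq_mul_inv]

theorem integral_sineSeries_mul_sineSeries {d : ℕ → ℝ} (hc : Summable c) (hd : Summable d) :
    ∫ x in (0 : ℝ)..1, sineSeries c x * sineSeries d x = ∑' n, d n * (c n / 2) := by
  rw [integral_mul_sineSeries hd ((continuous_sineSeries hc).intervalIntegrable _ _)]
  simp_rw [integral_sineSeries_mul_sin hc]

theorem integral_min_sub_mul_mul_sineSeries (hc : Summable c) {x : ℝ}
    (hx : x ∈ Set.Icc (0 : ℝ) 1) :
    ∫ y in (0 : ℝ)..1, (min x y - x * y) * sineSeries c y =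
      sineSeries (fun n => c n / sineFreq n ^ 2) x := by
  rw [integral_mul_sineSeries hc (Continuous.intervalIntegrable (by fun_prop) _ _)]
  refine tsum_congr fun n => ?_
  rw [integral_min_sub_mul_mul_sin (sineFreq_pos n).ne' (sin_sineFreq n) hx, div_mul_eq_mul_div,
    mul_div_assoc]

theorem summable_div_sineFreq_sq (hc : Summable c) :
    Summable fun n => c n / sineFreq n ^ 2 :=
  Summable.of_norm_bounded hc.abs fun n => by
    rw [norm_div, norm_of_nonneg (sq_nonneg (sineFreq n))]
    exact div_le_self (abs_nonneg _) (one_le_sineFreq_sq n)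

end SineSeries

/-- The coefficients of `y ↦ g_t(x, y)` in the basis of Dirichlet modes. -/
noncomputable def heatCoeff (t x : ℝ) (n : ℕ) : ℝ :=
  2 * exp (-sineFreq n ^ 2 * (t / 2)) * sin (sineFreq n * x)

theorem summable_heatCoeff {t : ℝ} (ht : 0 < t) (x : ℝ) : Summable (heatCoeff t x) := by
  have hle : ∀ n : ℕ, (n : ℝ) ≤ sineFreq n ^ 2 := fun n => by
    nlinarith [natCast_add_one_le_sineFreq n, one_le_sineFreq n]
  have hexp : Summable fun n => 2 * exp (-(t / 2) * sineFreq n ^ 2) :=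
    (summable_exp_nat_mul_of_ge (by linarith) hle).mul_left 2
  refine Summable.of_norm_bounded hexp fun n => (abs_mul_sin_le _ _).trans_eq ?_
  rw [abs_of_pos (by positivity), neg_mul_comm, mul_comm (sineFreq n ^ 2), neg_mul_comm]

theorem heatCoeff_mul_heatCoeff (s t x y : ℝ) (n : ℕ) :
    heatCoeff s x n * heatCoeff t y n = 2 * (heatCoeff (s + t) x n * sin (sineFreq n * y)) := by
  simp only [heatCoeff, add_div, mul_add, exp_add]
  ring

theorem heatg_eq_sineSeries {t : ℝ} (ht : 0 < t) (x y : ℝ) :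
    heatg t x y = sineSeries (heatCoeff t x) y := by
  have images := (hasSum_heatK_add_period_mul ht two_pos (x - y)).sub
    (hasSum_heatK_add_period_mul ht two_pos (x + y))
  have hτ : 0 < 2 * π * t / 2 ^ 2 := by positivity
  have modes := ((HurwitzZeta.hasSum_nat_cosKernel₀ ((x - y) / 2) hτ).sub
    (HurwitzZeta.hasSum_nat_cosKernel₀ ((x + y) / 2) hτ)).div_const 2
  rw [heatg, images.tsum_eq, ← sub_div, ← sub_sub_sub_cancel_right _ _ 1, ← modes.tsum_eq]
  refine tsum_congr fun n => ?_
  have hsub : 2 * π * ((x - y) / 2) * (n + 1) = sineFreq n * x - sineFreq n * y := by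
    unfold sineFreq; ring
  have hadd : 2 * π * ((x + y) / 2) * (n + 1) = sineFreq n * x + sineFreq n * y := by
    unfold sineFreq; ring
  have hrate : -π * (n + 1 : ℝ) ^ 2 * (2 * π * t / 2 ^ 2) = -sineFreq n ^ 2 * (t / 2) := by
    unfold sineFreq; ring
  rw [hsub, hadd, hrate, cos_sub, cos_add, heatCoeff]
  ring

theorem integral_Ioi_tsum_mul_exp {ι : Type*} [Countable ι] {a r : ι → ℝ} {t : ℝ}
    (hr : ∀ i, 0 < r i) (hsum : Summable fun i => a i * (exp (-r i * t) / r i)) :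
    ∫ s in Set.Ioi t, ∑' i, a i * exp (-r i * s) = ∑' i, a i * (exp (-r i * t) / r i) := by
  have hint : ∀ i, ∫ s in Set.Ioi t, exp (-r i * s) = exp (-r i * t) / r i := fun i => by
    rw [integral_exp_mul_Ioi (neg_neg_of_pos (hr i)), neg_div_neg_eq]
  have hnorm : ∀ i, ∫ s in Set.Ioi t, ‖a i * exp (-r i * s)‖ = |a i * (exp (-r i * t) / r i)| :=
    fun i => by
      simp_rw [norm_mul, norm_of_nonneg (exp_pos _).le, integral_const_mul, hint, abs_mul,
        abs_of_pos (div_pos (exp_pos _) (hr i)), norm_eq_abs]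
  rw [← integral_tsum_of_summable_integral_norm
    (fun i => (integrableOn_exp_mul_Ioi (neg_neg_of_pos (hr i)) t).const_mul (a i))
    (by simpa only [hnorm] using hsum.abs)]
  simp_rw [integral_const_mul, hint]

theorem integral_Ioi_heatg {t : ℝ} (ht : 0 < t) (x y : ℝ) :
    ∫ s in Set.Ioi t, heatg (2 * s) x y =
      sineSeries (fun n => heatCoeff (2 * t) x n / sineFreq n ^ 2) y := by
  have hterm : ∀ n, heatCoeff (2 * t) x n / sineFreq n ^ 2 * sin (sineFreq n * y) =
      2 * sin (sineFreq n * x) * sin (sineFreq n * y) *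
        (exp (-sineFreq n ^ 2 * t) / sineFreq n ^ 2) := fun n => by
    rw [heatCoeff, mul_div_cancel_left₀ t two_ne_zero]
    ring
  have hsummable := (hasSum_sineSeries
    (summable_div_sineFreq_sq (summable_heatCoeff (mul_pos two_pos ht) x)) y).summable
  simp_rw [sineSeries, hterm] at hsummable ⊢
  rw [← integral_Ioi_tsum_mul_exp (fun n => pow_pos (sineFreq_pos n) 2) hsummable]
  refine setIntegral_congr_fun measurableSet_Ioi fun s hs => ?_
  simp only [heatg_eq_sineSeries (mul_pos two_pos (ht.trans hs)), sineSeries, heatCoeff,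
    mul_div_cancel_left₀ s (two_ne_zero' ℝ)]
  exact tsum_congr fun n => by ring

theorem stmt5_general {s t : ℝ} (hs : 0 < s) (ht : 0 < t) (x y : ℝ) :
    ∫ σ in (0 : ℝ)..1, ∫ σ' in (0 : ℝ)..1,
        heatg s x σ * (min σ σ' - σ * σ') * heatg t y σ' =
      ∫ r in Set.Ioi ((s + t) / 2), heatg (2 * r) x y := by
  have hc := summable_heatCoeff hs x
  have hd := summable_heatCoeff ht y
  have inner : ∀ σ ∈ Set.uIcc (0 : ℝ) 1,
      ∫ σ' in (0 : ℝ)..1, heatg s x σ * (min σ σ' - σ * σ') * heatg t y σ' =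
        sineSeries (heatCoeff s x) σ *
          sineSeries (fun n => heatCoeff t y n / sineFreq n ^ 2) σ := fun σ hσ => by
    rw [Set.uIcc_of_le zero_le_one] at hσ
    simp_rw [mul_assoc, intervalIntegral.integral_const_mul, heatg_eq_sineSeries hs,
      heatg_eq_sineSeries ht, integral_min_sub_mul_mul_sineSeries hd hσ]
  rw [intervalIntegral.integral_congr inner,
    integral_sineSeries_mul_sineSeries hc (summable_div_sineFreq_sq hd),
    integral_Ioi_heatg (by positivity), mul_div_cancel₀ _ two_ne_zero]
  refine tsum_congr fun n => ?_
  linear_combination heatCoeff_mul_heatCoeff s t x y n / (2 * sineFreq n ^ 2)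

theorem stmt5 (t : ℝ) (ht : 0 < t) (θ θ' : ℝ)
    (hθ : θ ∈ Set.Ioo (0 : ℝ) 1) (hθ' : θ' ∈ Set.Ioo (0 : ℝ) 1) :
    ∫ σ in (0 : ℝ)..1, ∫ σ' in (0 : ℝ)..1,
        heatg t θ σ * (min σ σ' - σ * σ') * heatg t θ' σ' =
      ∫ s in Set.Ioi t, heatg (2 * s) θ θ' := by
  simpa using stmt5_general ht ht θ θ'
end

section
/- The constant c₁ := sup_{r>0} (2r³)^{-1/2} exp(-1/(8r)) is finite, and for every θ ∈ [0, 1/2] and t > 0: ∫₀^{2t} (1/(2√(2πr))) · exp(-(1-θ)²/(2r)) · (1 - exp(-2θ/r)) dr ≤ (2c₁/√π) · t · θ. -/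
open Real

/-- The range of `r ↦ (2r³)^{-1/2} exp(-1/(8r))` over `r > 0`; its supremum is `c₁`. -/
def c1Set : Set ℝ :=
  (fun r : ℝ => (Real.sqrt (2 * r ^ 3))⁻¹ * Real.exp (-(1 / (8 * r)))) '' Set.Ioi 0

/-!
Since `(1 + θ)² - (1 - θ)² = 4θ`, the integrand is half the difference of the Gaussian kernels
at distances `1 - θ` and `1 + θ`, a dipole of strength proportional to `θ`. The bound
`1 - exp (-u) ≤ u` extracts the factor `θ` at the cost of a factor `1 / r`, which turns the heat
kernel at distance `1 - θ` into a multiple of the first-passage density at that distance. This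
density is bounded in `r` as long as the distance stays away from `0`, so the integral is at most
the length `2t` of the interval times the bound.
-/

/-- The density at time `r` of the first passage of Brownian motion to distance `δ`, multiplied
by `√π / δ`. This normalisation makes `c₁` the supremum of `hittingProfile (1 / 2)`. -/
noncomputable def hittingProfile (δ r : ℝ) : ℝ :=
  (√(2 * r ^ 3))⁻¹ * exp (-(δ ^ 2 / (2 * r)))

section

variable {δ x y r : ℝ}

theorem hittingProfile_sq (hr : 0 ≤ r) :
    hittingProfile δ r ^ 2 = (2 * r ^ 3)⁻¹ * exp (-(δ ^ 2 / r)) := by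
  rw [hittingProfile, mul_pow, inv_pow, sq_sqrt (by positivity), ← exp_nat_mul]
  congr 2
  push_cast
  ring

theorem hittingProfile_le (hδ : 0 < δ) (hr : 0 < r) : hittingProfile δ r ≤ √3 / δ ^ 3 := by
  have cube_le_exp : (δ ^ 2 / r) ^ 3 / 6 ≤ exp (δ ^ 2 / r) :=
    pow_div_factorial_le_exp _ (by positivity) 3
  refine le_of_sq_le_sq ?_ (by positivity)
  calc hittingProfile δ r ^ 2 = (2 * r ^ 3)⁻¹ * (exp (δ ^ 2 / r))⁻¹ := by
        rw [hittingProfile_sq hr.le, exp_neg]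
    _ ≤ (2 * r ^ 3)⁻¹ * ((δ ^ 2 / r) ^ 3 / 6)⁻¹ := by gcongr
    _ = 3 / (δ ^ 3) ^ 2 := by field_simp; norm_num
    _ = (√3 / δ ^ 3) ^ 2 := by rw [div_pow, sq_sqrt zero_le_three]

theorem bddAbove_hittingProfile (hδ : 0 < δ) : BddAbove (hittingProfile δ '' Set.Ioi 0) :=
  ⟨√3 / δ ^ 3, Set.forall_mem_image.2 fun _ hr => hittingProfile_le hδ hr⟩

theorem hittingProfile_le_hittingProfile (h : |δ| ≤ |x|) (hr : 0 ≤ r) :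
    hittingProfile x r ≤ hittingProfile δ r := by
  have sq_le : δ ^ 2 ≤ x ^ 2 := sq_le_sq.2 h
  unfold hittingProfile
  gcongr

theorem gaussian_mul_div_eq_hittingProfile (hr : 0 < r) :
    1 / (2 * √(2 * π * r)) * exp (-x ^ 2 / (2 * r)) * (y / r) =
      hittingProfile x r * (y / (2 * √π)) := by
  have sqrt_mul_self_eq : √(2 * π * r) * r = √(2 * r ^ 3) * √π := by
    calc √(2 * π * r) * r = √(2 * π * r * r ^ 2) := by
          rw [sqrt_mul (by positivity) (r ^ 2), sqrt_sq hr.le]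
      _ = √(2 * r ^ 3 * π) := by ring_nf
      _ = √(2 * r ^ 3) * √π := sqrt_mul (by positivity) π
  calc _ = exp (-(x ^ 2 / (2 * r))) * y / (2 * (√(2 * π * r) * r)) := by
        rw [neg_div]; field_simp
    _ = _ := by rw [sqrt_mul_self_eq, hittingProfile]; field_simp

theorem abs_gaussian_dipole_le (hy : 0 ≤ y) (hr : 0 < r) :
    |1 / (2 * √(2 * π * r)) * exp (-x ^ 2 / (2 * r)) * (1 - exp (-y / r))| ≤
      hittingProfile x r * (y / (2 * √π)) := by
  have one_sub_nonneg : 0 ≤ 1 - exp (-y / r) := by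
    rw [sub_nonneg, exp_le_one_iff, neg_div]
    exact neg_nonpos.2 (by positivity)
  have one_sub_le : 1 - exp (-y / r) ≤ y / r := by
    rw [neg_div]
    exact sub_le_comm.1 (one_sub_le_exp_neg (y / r))
  rw [abs_of_nonneg (by positivity), ← gaussian_mul_div_eq_hittingProfile hr]
  gcongr

theorem integral_gaussian_dipole_le {c t : ℝ} (hy : 0 ≤ y) (ht : 0 ≤ t)
    (hc : ∀ r ∈ Set.Ioc 0 (2 * t), hittingProfile x r ≤ c) :
    ∫ r in (0 : ℝ)..(2 * t),
        1 / (2 * √(2 * π * r)) * exp (-x ^ 2 / (2 * r)) * (1 - exp (-y / r)) ≤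
      c / √π * t * y := by
  have norm_integrand_le : ∀ r ∈ Set.uIoc 0 (2 * t),
      ‖1 / (2 * √(2 * π * r)) * exp (-x ^ 2 / (2 * r)) * (1 - exp (-y / r))‖ ≤
        c * (y / (2 * √π)) := by
    intro r hr
    rw [Set.uIoc_of_le (by positivity)] at hr
    have profile_le : hittingProfile x r ≤ c := hc r hr
    exact (abs_gaussian_dipole_le hy hr.1).trans (by gcongr)
  calc _ ≤ c * (y / (2 * √π)) * |2 * t - 0| :=
        (le_norm_self _).trans
          (intervalIntegral.norm_integral_le_of_norm_le_const norm_integrand_le)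
    _ = c / √π * t * y := by
        rw [sub_zero, abs_of_nonneg (by positivity)]
        ring

end

theorem c1Set_eq_image_hittingProfile : c1Set = hittingProfile (1 / 2) '' Set.Ioi 0 := by
  refine Set.image_congr fun r _ => ?_
  have exponent_eq : 1 / (8 * r) = (1 / 2) ^ 2 / (2 * r) := by ring
  rw [hittingProfile, exponent_eq]

theorem stmt8_general {δ : ℝ} (hδ : 0 < δ) :
    BddAbove (hittingProfile δ '' Set.Ioi 0) ∧
    ∀ x y t : ℝ, δ ≤ |x| → 0 ≤ y → 0 ≤ t →
      ∫ r in (0 : ℝ)..(2 * t),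
          1 / (2 * √(2 * π * r)) * exp (-x ^ 2 / (2 * r)) * (1 - exp (-y / r)) ≤
        sSup (hittingProfile δ '' Set.Ioi 0) / √π * t * y := by
  refine ⟨bddAbove_hittingProfile hδ, fun x y t hx hy ht =>
    integral_gaussian_dipole_le hy ht fun r hr => ?_⟩
  calc hittingProfile x r ≤ hittingProfile δ r :=
        hittingProfile_le_hittingProfile (by rwa [abs_of_pos hδ]) hr.1.le
    _ ≤ sSup (hittingProfile δ '' Set.Ioi 0) :=
        le_csSup (bddAbove_hittingProfile hδ) (Set.mem_image_of_mem _ hr.1)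

theorem stmt8 :
    BddAbove c1Set ∧
    ∀ θ ∈ Set.Icc (0 : ℝ) (1 / 2), ∀ t : ℝ, 0 < t →
      ∫ r in (0 : ℝ)..(2 * t),
          1 / (2 * Real.sqrt (2 * Real.pi * r)) * Real.exp (-(1 - θ) ^ 2 / (2 * r)) *
            (1 - Real.exp (-(2 * θ) / r)) ≤
        2 * sSup c1Set / Real.sqrt Real.pi * t * θ := by
  rw [c1Set_eq_image_hittingProfile]
  refine (stmt8_general one_half_pos).imp_right fun integral_le θ ⟨hθ₀, hθ⟩ t ht => ?_
  have half_le : 1 / 2 ≤ |1 - θ| := le_abs.2 (.inl (by linarith))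
  exact (integral_le (1 - θ) (2 * θ) t half_le (by positivity) ht.le).trans_eq (by ring)
end
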